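/- The functor M ↦ R/(t−1) ⊗_{R[t^{−1}]} M, which sends a Γ-graded R[t^{−1}]-module to the induced Γ̄-graded R/(t−1)-module (where Γ̄ = Γ/ℤγ and the δ̄-component of the image is the image of the sum of the components M_ε over ε ∈ δ + ℤγ), is an equivalence between the category of Γ-graded R[t^{−1}]-modules with degree-preserving homomorphisms and the category of Γ̄-graded R/(t−1)-modules with degree-preserving homomorphisms. -/

import Mathlib

/-!
STATEMENT 17 (Proposition 11.1 of the paper, generalizing Smith–Zhang).
Let `Γ` be a finitely generated abelian group of rank 1 and `R` a `Γ`-graded connected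
`k`-algebra with a surjection `ν : Γ → ℤ` positive on degrees of nonzero components.
Fix `0 ≠ γ ∈ Γ` and a nonzero homogeneous `t ∈ R_γ`.  Then the functor
`M ↦ R/(t−1) ⊗_{R[t⁻¹]} M` (whose `δ̄`-component is the image of the sum of the
components `M_ε` over `ε ∈ δ + ℤγ`) is an equivalence from the category of `Γ`-graded
`R[t⁻¹]`-modules with degree-preserving homomorphisms to the category of
`Γ̄ = Γ/ℤγ`-graded `R/(t−1)`-modules with degree-preserving homomorphisms: it takes
values in graded modules, is fully faithful, and is essentially surjective.
-/

set_option synthInstance.maxHeartbeats 1000000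
set_option maxHeartbeats 1000000

noncomputable section

open TensorProduct

/-- A `Γ'`-graded module over a ring `B` endowed with a family `ℬ` of `k`-subspaces
(`ℬ δ` being the degree-`δ` component of `B`): a `B`-module with a direct sum
decomposition into `k`-subspaces, compatible with `ℬ`. -/
structure GradedMod (k : Type) [Field k] (B : Type) [CommRing B] [Algebra k B]
    (Γ' : Type) [AddCommGroup Γ'] [DecidableEq Γ'] (ℬ : Γ' → Submodule k B) where
  carrier : Type
  [isAddCommGroup : AddCommGroup carrier]
  [isModule : Module B carrier]
  [isKModule : Module k carrier]
  [isTower : IsScalarTower k B carrier]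
  grading : Γ' → Submodule k carrier
  internal : DirectSum.IsInternal grading
  smul_mem : ∀ (δ ε : Γ') (r : B), r ∈ ℬ δ → ∀ m ∈ grading ε, r • m ∈ grading (δ + ε)

attribute [instance] GradedMod.isAddCommGroup GradedMod.isModule GradedMod.isKModule
  GradedMod.isTower

/-- Degree-preserving `B`-linear maps between graded modules. -/
def GradedHom {k : Type} [Field k] {B : Type} [CommRing B] [Algebra k B]
    {Γ' : Type} [AddCommGroup Γ'] [DecidableEq Γ'] {ℬ : Γ' → Submodule k B}
    (M M' : GradedMod k B Γ' ℬ) : Type :=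
  {f : M.carrier →ₗ[B] M'.carrier //
    ∀ δ, (M.grading δ).map (f.restrictScalars k) ≤ M'.grading δ}

section Statement17

variable (k : Type) [Field k] [IsAlgClosed k] [CharZero k]
variable (Γ : Type) [AddCommGroup Γ] [DecidableEq Γ]
variable (R : Type) [CommRing R] [Algebra k R]
variable (𝒜 : Γ → Submodule k R) [GradedAlgebra 𝒜]
variable (γ : Γ) (t : R)
variable [DecidableEq (Γ ⧸ AddSubgroup.zmultiples γ)]

/-- The degree-`δ` component of the `Γ`-grading of the localization `R[t⁻¹]`:
spanned by the fractions `r / tᵐ` with `r ∈ 𝒜 (δ + m γ)`. -/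
def locGrading (δ : Γ) : Submodule k (Localization.Away t) :=
  Submodule.span k {x | ∃ (m : ℕ) (r : R), r ∈ 𝒜 (δ + m • γ) ∧
    x = Localization.mk r ⟨t ^ m, (Submonoid.mem_powers_iff _ _).mpr ⟨m, rfl⟩⟩}

/-- `R̄ = R/(t−1)`. -/
abbrev BarRing : Type := R ⧸ Ideal.span {t - 1}

/-- The degree-`δ̄` component of the `Γ̄ = Γ/ℤγ`-grading of `R/(t−1)`: the image of the
sum of the components `𝒜 ε` over `ε ∈ δ̄`. -/
def barGrading (d : Γ ⧸ AddSubgroup.zmultiples γ) : Submodule k (BarRing R t) :=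
  Submodule.span k {x | ∃ ε : Γ,
    (QuotientAddGroup.mk ε : Γ ⧸ AddSubgroup.zmultiples γ) = d ∧
    ∃ r ∈ 𝒜 ε, x = Ideal.Quotient.mk (Ideal.span {t - 1}) r}

/-- `R/(t−1)` is an `R[t⁻¹]`-algebra via the natural surjection
`φ : R[t⁻¹] → R/(t−1)` (the image of `t` in `R/(t−1)` is `1`, hence invertible). -/
instance barAlgebra : Algebra (Localization.Away t) (BarRing R t) :=
  (Localization.awayLift (Ideal.Quotient.mk (Ideal.span {t - 1})) t
    (by
      have h1 : Ideal.Quotient.mk (Ideal.span {t - 1}) t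
          = Ideal.Quotient.mk (Ideal.span {t - 1}) 1 :=
        Ideal.Quotient.eq.mpr (Ideal.subset_span rfl)
      rw [h1, map_one]
      exact isUnit_one)).toAlgebra

instance barSMulCommClass : SMulCommClass (Localization.Away t) k (BarRing R t) :=
  ⟨fun a b c => by
    simp only [Algebra.smul_def]
    ring⟩

/-- The underlying module of the image of a graded `R[t⁻¹]`-module `M` under the
functor: `R/(t−1) ⊗_{R[t⁻¹]} M`. -/
abbrev FCarrier (M : GradedMod k (Localization.Away t) Γ (locGrading k Γ R 𝒜 γ t)) :
    Type :=
  BarRing R t ⊗[Localization.Away t] M.carrier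

/-- The `δ̄`-component of the image of a graded module under the functor: the image of
the sum of the components `M_ε`, `ε ∈ δ̄`, under `m ↦ 1 ⊗ m`. -/
def FGrading (M : GradedMod k (Localization.Away t) Γ (locGrading k Γ R 𝒜 γ t))
    (d : Γ ⧸ AddSubgroup.zmultiples γ) : Submodule k (FCarrier k Γ R 𝒜 γ t M) :=
  Submodule.span k {z | ∃ ε : Γ,
    (QuotientAddGroup.mk ε : Γ ⧸ AddSubgroup.zmultiples γ) = d ∧
    ∃ m ∈ M.grading ε,
      z = (1 : BarRing R t) ⊗ₜ[Localization.Away t] m}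

/-- The action of the functor `R/(t−1) ⊗_{R[t⁻¹]} (−)` on degree-preserving
homomorphisms. -/
def inducedMap (M M' : GradedMod k (Localization.Away t) Γ (locGrading k Γ R 𝒜 γ t))
    (f : GradedHom M M') :
    {g : FCarrier k Γ R 𝒜 γ t M →ₗ[BarRing R t] FCarrier k Γ R 𝒜 γ t M' //
      ∀ d, (FGrading k Γ R 𝒜 γ t M d).map (g.restrictScalars k)
        ≤ FGrading k Γ R 𝒜 γ t M' d} :=
  ⟨LinearMap.baseChange (BarRing R t) f.1, by
    intro d
    rw [FGrading, Submodule.map_span]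
    refine Submodule.span_le.mpr ?_
    rintro z ⟨w, ⟨ε, hε, m, hm, rfl⟩, rfl⟩
    refine Submodule.subset_span ⟨ε, hε, f.1 m, ?_, ?_⟩
    · exact f.2 ε (Submodule.mem_map.mpr ⟨m, hm, rfl⟩)
    · exact (LinearMap.baseChange_tmul f.1 1 m).symm⟩

end Statement17

/-!
The image `u` of `t` in `L = R[t⁻¹]` is a unit of degree `γ`, and `B = R/(t - 1)` is `L/(u - 1)L`,
so that `B ⊗ M = M/(u - 1)M` for every `L`-module `M`. If `M` is graded and `γ` has infinite order,
the map `M → M_δ` given by `m ↦ ∑ₙ u⁻ⁿ m_{δ + nγ}` kills `(u - 1)M` and is the identity on `M_δ`;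
hence `M_δ` is isomorphic to the component of `B ⊗ M` at the class of `δ`, the components of
`B ⊗ M` are independent, and graded maps can be transported along these isomorphisms. Conversely,
a graded `B`-module `N` comes from `⨁ δ : Γ, N_δ̄`, on which `L` acts through `B` with a shift of
degrees.
-/

section DirectSum

open DirectSum

variable {ι k V W : Type*} [CommRing k] [AddCommGroup V] [Module k V]
  [AddCommGroup W] [Module k W]

theorem iSupIndep_of_le_of_disjoint {A C : ι → Submodule k V} (hle : ∀ i j, j ≠ i → A j ≤ C i)
    (hdisj : ∀ i, Disjoint (A i) (C i)) : iSupIndep A :=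
  fun i => (hdisj i).mono_right (iSup₂_le (hle i))

theorem bijective_of_bijOn_of_isInternal [DecidableEq ι] {A : ι → Submodule k V}
    {A' : ι → Submodule k W} (hA : IsInternal A) (hA' : IsInternal A') (f : V →ₗ[k] W)
    (hf : ∀ i, Set.BijOn f (A i) (A' i)) : Function.Bijective f := by
  let f' (i : ι) : A i →ₗ[k] A' i := f.restrict (hf i).mapsTo
  have hf' : Function.Bijective (lmap f') := by
    refine ⟨(lmap_injective f').2 fun i => ?_, (lmap_surjective f').2 fun i => ?_⟩
    · exact (hf i).mapsTo.restrict_inj.2 (hf i).injOn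
    · exact (hf i).mapsTo.restrict_surjective_iff.2 (hf i).surjOn
  have hcomm : f ∘ₗ coeLinearMap A = coeLinearMap A' ∘ₗ lmap f' := by
    ext i x
    simpa using (f.coe_restrict_apply (hf i).mapsTo x).symm
  have hcomp : Function.Bijective (f ∘ₗ coeLinearMap A) := by
    rw [hcomm]
    exact (show Function.Bijective (coeLinearMap A') from hA').comp hf'
  exact (Function.Bijective.of_comp_iff f hA).1 hcomp

theorem isInternal_range_lof [DecidableEq ι] (P : ι → Type*) [∀ i, AddCommGroup (P i)]
    [∀ i, Module k (P i)] : IsInternal fun i => LinearMap.range (lof k ι P i) := by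
  let e (i : ι) : P i ≃ₗ[k] LinearMap.range (lof k ι P i) := .ofInjective _ (of_injective i)
  have hcomp : coeLinearMap (fun i => LinearMap.range (lof k ι P i)) ∘ₗ
      lmap (fun i => (e i).toLinearMap) = .id := by
    ext i x : 2
    simpa [e] using LinearEquiv.ofInjective_apply (lof k ι P i) x
  have he : Function.Bijective (lmap fun i => (e i).toLinearMap) :=
    ⟨(lmap_injective _).2 fun i => (e i).injective, (lmap_surjective _).2 fun i => (e i).surjective⟩
  refine (Function.Bijective.of_comp_iff _ he).1 ?_
  exact congr(Function.Bijective $hcomp).mpr Function.bijective_id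

end DirectSum

theorem not_isOfFinAddOrder_of_map_ne_zero {G H : Type*} [AddMonoid G] [AddMonoid H]
    [IsAddTorsionFree H] (f : G →+ H) {g : G} (hg : f g ≠ 0) : ¬ IsOfFinAddOrder g :=
  fun h => hg ((isOfFinAddOrder_iff_eq_zero _).1 (f.isOfFinAddOrder h))

section Coefficients

variable {Γ L : Type*} [AddCommGroup Γ] [CommRing L] {γ : Γ}

/-- The factor `u⁻ⁿ` that brings an element of degree `δ + n • γ` to degree `δ` when `u` has
degree `γ`; it is `0` in the degrees outside the coset of `δ`. -/
def shiftCoeff (γ : Γ) (u : Lˣ) (δ : Γ) : Γ → L :=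
  Function.extend (fun n : ℤ => δ + n • γ) (fun n => ↑(u ^ (-n))) 0

theorem shiftCoeff_add_zsmul (hγ : ¬ IsOfFinAddOrder γ) (u : Lˣ) (δ : Γ) (n : ℤ) :
    shiftCoeff γ u δ (δ + n • γ) = ↑(u ^ (-n)) :=
  ((add_right_injective δ).comp
    (injective_zsmul_iff_not_isOfFinAddOrder.2 hγ)).extend_apply _ _ n

theorem exists_eq_add_zsmul_iff {δ ε : Γ} : (∃ n : ℤ, δ + n • γ = ε) ↔
    (QuotientAddGroup.mk ε : Γ ⧸ AddSubgroup.zmultiples γ) = QuotientAddGroup.mk δ := by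
  rw [eq_comm, QuotientAddGroup.eq, AddSubgroup.mem_zmultiples_iff]
  simp only [eq_neg_add_iff_add_eq]

theorem shiftCoeff_self (hγ : ¬ IsOfFinAddOrder γ) (u : Lˣ) (δ : Γ) :
    shiftCoeff γ u δ δ = 1 := by
  simpa using shiftCoeff_add_zsmul hγ u δ 0

theorem shiftCoeff_eq_zero (u : Lˣ) {δ ε : Γ}
    (h : (QuotientAddGroup.mk ε : Γ ⧸ AddSubgroup.zmultiples γ) ≠ QuotientAddGroup.mk δ) :
    shiftCoeff γ u δ ε = 0 :=
  Function.extend_apply' _ _ _ (mt exists_eq_add_zsmul_iff.1 h)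

theorem shiftCoeff_add_mul (hγ : ¬ IsOfFinAddOrder γ) (u : Lˣ) (δ ε : Γ) :
    shiftCoeff γ u δ (γ + ε) * u = shiftCoeff γ u δ ε := by
  by_cases h : (QuotientAddGroup.mk ε : Γ ⧸ AddSubgroup.zmultiples γ) = QuotientAddGroup.mk δ
  · obtain ⟨n, rfl⟩ := exists_eq_add_zsmul_iff.2 h
    have hshift : γ + (δ + n • γ) = δ + (n + 1) • γ := by rw [add_smul, one_smul]; abel
    rw [hshift, shiftCoeff_add_zsmul hγ, shiftCoeff_add_zsmul hγ, ← Units.val_mul,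
      ← zpow_add_one, neg_add, neg_add_cancel_right]
  · rw [shiftCoeff_eq_zero u h, shiftCoeff_eq_zero u, zero_mul]
    rwa [add_comm, QuotientAddGroup.mk_add_of_mem ε (AddSubgroup.mem_zmultiples γ)]

end Coefficients

theorem inv_mem_neg_of_mem {k Γ L : Type*} [AddCommGroup Γ] [DecidableEq Γ] [CommRing k]
    [CommRing L] [Algebra k L] {ℒ : Γ → Submodule k L} [GradedAlgebra ℒ] {γ : Γ} {u : Lˣ}
    (hu : ↑u ∈ ℒ γ) : ↑u⁻¹ ∈ ℒ (-γ) := by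
  have h : ((DirectSum.decompose ℒ (u * ↑u⁻¹ : L) (γ + -γ)) : L)
      = u * DirectSum.decompose ℒ (↑u⁻¹ : L) (-γ) :=
    DirectSum.coe_decompose_mul_add_of_left_mem ℒ hu
  rw [u.mul_inv, add_neg_cancel, DirectSum.decompose_of_mem_same ℒ SetLike.GradedOne.one_mem,
    ← Units.inv_mul_eq_iff_eq_mul, mul_one] at h
  rw [h]
  exact SetLike.coe_mem _

section Specialization

open DirectSum

variable {k Γ L V Q : Type*} [AddCommGroup Γ] [CommRing k] [CommRing L]
  [Algebra k L] [AddCommGroup V] [Module k V] [Module L V] [IsScalarTower k L V]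
  [AddCommGroup Q] [Module L Q]

/-- `σ : V → Q` identifies `Q` with `V / (u - 1) V`, the specialization of `V` at `u = 1`. -/
structure IsSpecialization (u : Lˣ) (σ : V →ₗ[L] Q) : Prop where
  exact : Function.Exact (LinearMap.lsmul L V (u - 1)) σ
  surjective : Function.Surjective σ

variable {γ : Γ} {u : Lˣ} {σ : V →ₗ[L] Q}

theorem IsSpecialization.map_smul_unit (hσ : IsSpecialization u σ) (v : V) :
    σ ((u : L) • v) = σ v := by
  simpa [sub_smul, sub_eq_zero] using hσ.exact.apply_apply_eq_zero v

theorem IsSpecialization.mk_one {B : Type*} [CommRing B] [Algebra L B]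
    (hB : IsSpecialization u (Algebra.linearMap L B)) :
    IsSpecialization u (TensorProduct.mk L B V 1) where
  exact v := by
    constructor
    · intro hv
      obtain ⟨y, hy⟩ := (rTensor_exact V hB.exact hB.surjective (1 ⊗ₜ v)).1 (by simpa using hv)
      obtain ⟨w, rfl⟩ := (TensorProduct.lid L V).symm.surjective y
      exact ⟨w, by simpa using congrArg (TensorProduct.lid L V) hy⟩
    · rintro ⟨w, rfl⟩
      have hu : algebraMap L B (u - 1) = 0 := by simpa using hB.exact.apply_apply_eq_zero 1
      rw [LinearMap.lsmul_apply, TensorProduct.mk_apply, ← TensorProduct.smul_tmul,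
        ← Algebra.algebraMap_eq_smul_one, hu, TensorProduct.zero_tmul]
  surjective := TensorProduct.mk_surjective L V B hB.surjective

section CosetCollapse

variable (ℳ : Γ → Submodule k V) [DecidableEq Γ] [Decomposition ℳ]

/-- The map `V → V` which moves every component of degree in `δ + ℤγ` into degree `δ` by the
appropriate power of `u`, and kills all other components. -/
def cosetCollapse (γ : Γ) (u : Lˣ) (δ : Γ) : V →ₗ[k] V :=
  toModule k Γ V (fun ε => Algebra.lsmul k k V (shiftCoeff γ u δ ε) ∘ₗ (ℳ ε).subtype) ∘ₗ
    (decomposeLinearEquiv ℳ).toLinearMap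

variable {ℳ} {ℒ : Γ → Submodule k L}

theorem cosetCollapse_of_mem (u : Lˣ) (δ : Γ) {ε : Γ} {m : V} (hm : m ∈ ℳ ε) :
    cosetCollapse ℳ γ u δ m = shiftCoeff γ u δ ε • m := by
  lift m to ℳ ε using hm
  simp [cosetCollapse]

theorem cosetCollapse_eq_self (hγ : ¬ IsOfFinAddOrder γ) {δ : Γ} {m : V} (hm : m ∈ ℳ δ) :
    cosetCollapse ℳ γ u δ m = m := by
  rw [cosetCollapse_of_mem u δ hm, shiftCoeff_self hγ, one_smul]

theorem cosetCollapse_smul [SetLike.GradedSMul ℒ ℳ] (hγ : ¬ IsOfFinAddOrder γ) (hu : ↑u ∈ ℒ γ)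
    (δ : Γ) (m : V) : cosetCollapse ℳ γ u δ ((u : L) • m) = cosetCollapse ℳ γ u δ m := by
  induction m using Decomposition.inductionOn ℳ with
  | zero => simp
  | @homogeneous ε m =>
    rw [cosetCollapse_of_mem u δ m.2,
      cosetCollapse_of_mem u δ (SetLike.GradedSMul.smul_mem hu m.2), smul_smul, vadd_eq_add,
      shiftCoeff_add_mul hγ]
  | add x y hx hy => simp only [smul_add, map_add, hx, hy]

namespace IsSpecialization

variable [SetLike.GradedSMul ℒ ℳ]

theorem cosetCollapse_eq_zero (hσ : IsSpecialization u σ) (hγ : ¬ IsOfFinAddOrder γ)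
    (hu : ↑u ∈ ℒ γ) (δ : Γ) {m : V} (hm : σ m = 0) :
    cosetCollapse ℳ γ u δ m = 0 := by
  obtain ⟨w, rfl⟩ := (hσ.exact m).1 hm
  rw [LinearMap.lsmul_apply, sub_smul, one_smul, map_sub, cosetCollapse_smul hγ hu, sub_self]

theorem injOn (hσ : IsSpecialization u σ) (hγ : ¬ IsOfFinAddOrder γ)
    (hu : ↑u ∈ ℒ γ) (δ : Γ) : Set.InjOn σ (ℳ δ) := by
  intro x hx y hy hxy
  rw [← sub_eq_zero, ← map_sub] at hxy
  rw [← sub_eq_zero, ← cosetCollapse_eq_self (u := u) hγ (sub_mem hx hy)]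
  exact hσ.cosetCollapse_eq_zero hγ hu δ hxy

-- The component `𝒬 d` is complemented by the image of the kernel of the collapse onto a degree
-- representing `d`.
theorem isInternal [Module k Q] [IsScalarTower k L Q] (hσ : IsSpecialization u σ)
    (hγ : ¬ IsOfFinAddOrder γ) (hu : ↑u ∈ ℒ γ) [DecidableEq (Γ ⧸ AddSubgroup.zmultiples γ)]
    {𝒬 : Γ ⧸ AddSubgroup.zmultiples γ → Submodule k Q}
    (h𝒬 : ∀ δ, 𝒬 (QuotientAddGroup.mk δ) = (ℳ δ).map (σ.restrictScalars k)) :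
    IsInternal 𝒬 := by
  have hout (d : Γ ⧸ AddSubgroup.zmultiples γ) : 𝒬 d = (ℳ d.out).map (σ.restrictScalars k) := by
    rw [← h𝒬, QuotientAddGroup.out_eq']
  refine isInternal_submodule_of_iSupIndep_of_iSup_eq_top (iSupIndep_of_le_of_disjoint
    (C := fun d => (LinearMap.ker (cosetCollapse ℳ γ u d.out)).map (σ.restrictScalars k))
    (fun d e hed => ?_) fun d => ?_) ?_
  · rw [hout]
    refine Submodule.map_mono fun m hm => ?_
    rw [LinearMap.mem_ker, cosetCollapse_of_mem u _ hm, shiftCoeff_eq_zero u (by simpa using hed),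
      zero_smul]
  · rw [hout, Submodule.disjoint_def]
    rintro _ ⟨m, hm, rfl⟩ ⟨m', hm', h⟩
    have hzero : cosetCollapse ℳ γ u d.out (m' - m) = 0 :=
      hσ.cosetCollapse_eq_zero hγ hu d.out (by simpa [sub_eq_zero] using h)
    rw [map_sub, LinearMap.mem_ker.1 hm', cosetCollapse_eq_self hγ hm, zero_sub,
      neg_eq_zero] at hzero
    rw [hzero, map_zero]
  · rw [eq_top_iff, ← LinearMap.range_eq_top.2 (show Function.Surjective (σ.restrictScalars k)
      from hσ.surjective), LinearMap.range_eq_map,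
      ← (Decomposition.isInternal ℳ).submodule_iSup_eq_top, Submodule.map_iSup]
    exact iSup_le fun δ => (h𝒬 δ).ge.trans (le_iSup 𝒬 _)

theorem bijective_of_bijOn [Module k Q] [IsScalarTower k L Q] (hσ : IsSpecialization u σ)
    (hγ : ¬ IsOfFinAddOrder γ) (hu : ↑u ∈ ℒ γ) [DecidableEq (Γ ⧸ AddSubgroup.zmultiples γ)]
    {𝒬 : Γ ⧸ AddSubgroup.zmultiples γ → Submodule k Q}
    (h𝒬 : ∀ δ, 𝒬 (QuotientAddGroup.mk δ) = (ℳ δ).map (σ.restrictScalars k))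
    {W : Type*} [AddCommGroup W] [Module k W]
    {𝒲 : Γ ⧸ AddSubgroup.zmultiples γ → Submodule k W} (h𝒲 : IsInternal 𝒲) (f : Q →ₗ[k] W)
    (hf : ∀ δ, Set.BijOn (f ∘ σ) (ℳ δ) (𝒲 (QuotientAddGroup.mk δ))) : Function.Bijective f := by
  refine bijective_of_bijOn_of_isInternal (hσ.isInternal hγ hu h𝒬) h𝒲 f fun d => ?_
  obtain ⟨δ, rfl⟩ := QuotientAddGroup.mk_surjective d
  have himage : (𝒬 (QuotientAddGroup.mk δ) : Set Q) = σ '' ℳ δ := by simp [h𝒬]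
  rw [himage]
  exact ⟨Set.mapsTo_image_iff.2 (hf δ).mapsTo, (hf δ).injOn.image_of_comp, by
    simpa only [Set.SurjOn, Set.image_comp] using (hf δ).surjOn⟩

end IsSpecialization

end CosetCollapse

theorem IsSpecialization.map_periodic [DecidableEq Γ] {ℒ : Γ → Submodule k L} [GradedAlgebra ℒ]
    {ℳ : Γ → Submodule k V} [SetLike.GradedSMul ℒ ℳ] [Module k Q] [IsScalarTower k L Q]
    (hσ : IsSpecialization u σ) (hu : ↑u ∈ ℒ γ) :
    Function.Periodic (fun ε => (ℳ ε).map (σ.restrictScalars k)) γ := by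
  refine fun ε => le_antisymm ?_ ?_
  · rintro _ ⟨m, hm, rfl⟩
    refine ⟨(↑u⁻¹ : L) • m, ?_, ?_⟩
    · simpa [vadd_eq_add] using SetLike.GradedSMul.smul_mem (inv_mem_neg_of_mem hu) hm
    · change σ ((↑u⁻¹ : L) • m) = σ m
      rw [← hσ.map_smul_unit, smul_smul, u.mul_inv, one_smul]
  · rintro _ ⟨m, hm, rfl⟩
    exact ⟨(u : L) • m, by simpa [vadd_eq_add, add_comm] using SetLike.GradedSMul.smul_mem hu hm,
      hσ.map_smul_unit m⟩

theorem IsSpecialization.map_eq_map_of_mk_eq [DecidableEq Γ] {ℒ : Γ → Submodule k L}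
    [GradedAlgebra ℒ] {ℳ : Γ → Submodule k V} [SetLike.GradedSMul ℒ ℳ] [Module k Q]
    [IsScalarTower k L Q] (hσ : IsSpecialization u σ) (hu : ↑u ∈ ℒ γ) {δ ε : Γ}
    (h : (QuotientAddGroup.mk δ : Γ ⧸ AddSubgroup.zmultiples γ) = QuotientAddGroup.mk ε) :
    (ℳ δ).map (σ.restrictScalars k) = (ℳ ε).map (σ.restrictScalars k) := by
  have hper := hσ.map_periodic (ℳ := ℳ) hu
  rw [← hper.lift_coe, h, hper.lift_coe]

end Specialization

section GradedModule

open DirectSum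

variable {k Γ L M M' N : Type*} [DecidableEq Γ] [CommRing k] [CommRing L] [Algebra k L]
  [AddCommGroup M] [Module k M] [Module L M] {ℳ : Γ → Submodule k M} [Decomposition ℳ]
  [AddCommGroup M'] [Module k M'] [Module L M'] [IsScalarTower k L M'] {ℳ' : Γ → Submodule k M'}
  [AddCommGroup N] [Module L N]

theorem gradedHom_ext_of_injOn [IsScalarTower k L M] {σ : M' →ₗ[L] N}
    (hσ : ∀ δ, Set.InjOn σ (ℳ' δ)) {f g : M →ₗ[L] M'}
    (hf : ∀ δ, (ℳ δ).map (f.restrictScalars k) ≤ ℳ' δ)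
    (hg : ∀ δ, (ℳ δ).map (g.restrictScalars k) ≤ ℳ' δ) (h : σ ∘ₗ f = σ ∘ₗ g) : f = g := by
  ext m
  induction m using Decomposition.inductionOn ℳ with
  | zero => simp
  | @homogeneous δ m =>
    exact hσ δ (hf δ ⟨m, m.2, rfl⟩) (hg δ ⟨m, m.2, rfl⟩) (LinearMap.congr_fun h m)
  | add m m' hm hm' => simp only [map_add, hm, hm']

variable [AddCommGroup Γ] {ℒ : Γ → Submodule k L} [GradedAlgebra ℒ] [Module k N]

theorem map_smul_of_homogeneous (f : M →ₗ[k] N)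
    (hf : ∀ δ, ∀ a ∈ ℒ δ, ∀ ε, ∀ m ∈ ℳ ε, f (a • m) = a • f m) (a : L) (m : M) :
    f (a • m) = a • f m := by
  induction a using Decomposition.inductionOn ℒ with
  | zero => simp
  | add a b ha hb => simp only [add_smul, map_add, ha, hb]
  | homogeneous a =>
    induction m using Decomposition.inductionOn ℳ with
    | zero => simp
    | homogeneous m => exact hf _ a a.2 _ m m.2
    | add m m' hm hm' => simp only [smul_add, map_add, hm, hm']

theorem exists_gradedHom_comp_eq [IsScalarTower k L M] [IsScalarTower k L N]
    [SetLike.GradedSMul ℒ ℳ] [SetLike.GradedSMul ℒ ℳ'] {σ : M' →ₗ[L] N}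
    (hσ : ∀ δ, Set.InjOn σ (ℳ' δ)) (g : M →ₗ[L] N)
    (hg : ∀ δ, (ℳ δ).map (g.restrictScalars k) ≤ (ℳ' δ).map (σ.restrictScalars k)) :
    ∃ f : M →ₗ[L] M', (∀ δ, (ℳ δ).map (f.restrictScalars k) ≤ ℳ' δ) ∧ σ ∘ₗ f = g := by
  let σ' (δ : Γ) : ℳ' δ ≃ₗ[k] (ℳ' δ).map (σ.restrictScalars k) :=
    .ofBijective ((σ.restrictScalars k).submoduleMap (ℳ' δ))
      ⟨fun x y h => Subtype.ext (hσ δ x.2 y.2 congr($h)), LinearMap.submoduleMap_surjective _ _⟩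
  let g' (δ : Γ) : ℳ δ →ₗ[k] (ℳ' δ).map (σ.restrictScalars k) :=
    (g.restrictScalars k).restrict (Submodule.map_le_iff_le_comap.1 (hg δ))
  let f : M →ₗ[k] M' :=
    toModule k Γ M' (fun δ => (ℳ' δ).subtype ∘ₗ (σ' δ).symm.toLinearMap ∘ₗ g' δ) ∘ₗ
      (decomposeLinearEquiv ℳ).toLinearMap
  have hf_coe (δ) (m : ℳ δ) : f m = (σ' δ).symm (g' δ m) := by simp [f]
  have hf_mem (δ) (m : M) (hm : m ∈ ℳ δ) : f m ∈ ℳ' δ := by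
    simp [hf_coe δ ⟨m, hm⟩]
  have hσf (m : M) : σ (f m) = g m := by
    induction m using Decomposition.inductionOn ℳ with
    | zero => simp
    | @homogeneous δ m =>
      rw [hf_coe]
      exact congr(($((σ' δ).apply_symm_apply (g' δ m)) : N))
    | add m m' hm hm' => simp only [map_add, hm, hm']
  have hf_smul (δ) (a : L) (ha : a ∈ ℒ δ) (ε) (m : M) (hm : m ∈ ℳ ε) : f (a • m) = a • f m :=
    hσ (δ +ᵥ ε) (hf_mem _ _ (SetLike.GradedSMul.smul_mem ha hm))
      (SetLike.GradedSMul.smul_mem ha (hf_mem _ _ hm)) (by simp only [map_smul, hσf])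
  refine ⟨{ f with map_smul' := map_smul_of_homogeneous f hf_smul }, ?_, LinearMap.ext hσf⟩
  rintro δ _ ⟨m, hm, rfl⟩
  exact hf_mem δ m hm

end GradedModule

section Homogenization

open DirectSum

variable {k Γ L N : Type*} [DecidableEq Γ] [CommRing k] [CommRing L]
  [Algebra k L] [AddCommGroup N] [Module k N]

/-- The homogenization of an `L`-module `N` along subspaces `𝒩 δ`, which need not be independent
(`𝒩` may be constant on the cosets of a subgroup): their external direct sum. The grading of `L` is
recorded in the type because the action of `L` depends on it. -/
def Homogenization (_ : Γ → Submodule k L) (𝒩 : Γ → Submodule k N) : Type _ := ⨁ δ, 𝒩 δ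

namespace Homogenization

variable (ℒ : Γ → Submodule k L) (𝒩 : Γ → Submodule k N)

instance : AddCommGroup (Homogenization ℒ 𝒩) := inferInstanceAs (AddCommGroup (⨁ δ, 𝒩 δ))

instance : Module k (Homogenization ℒ 𝒩) := inferInstanceAs (Module k (⨁ δ, 𝒩 δ))

/-- The inclusion of the component of degree `δ`. -/
def incl (δ : Γ) : 𝒩 δ →ₗ[k] Homogenization ℒ 𝒩 := lof k Γ (fun δ => 𝒩 δ) δ

/-- The canonical grading of the homogenization. -/
def grading (δ : Γ) : Submodule k (Homogenization ℒ 𝒩) := LinearMap.range (incl ℒ 𝒩 δ)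

/-- The `k`-linear map to the ambient module given by the inclusions of the `𝒩 δ`. -/
def coeLinearMap : Homogenization ℒ 𝒩 →ₗ[k] N := DirectSum.coeLinearMap 𝒩

theorem coeLinearMap_incl {δ : Γ} (x : 𝒩 δ) : coeLinearMap ℒ 𝒩 (incl ℒ 𝒩 δ x) = x :=
  coeLinearMap_lof 𝒩 δ x

instance : Decomposition (grading ℒ 𝒩) :=
  (isInternal_range_lof fun δ => 𝒩 δ).chooseDecomposition

theorem bijOn_coeLinearMap (δ : Γ) :
    Set.BijOn (coeLinearMap ℒ 𝒩) (grading ℒ 𝒩 δ) (𝒩 δ) := by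
  refine ⟨?_, ?_, fun x hx => ⟨incl ℒ 𝒩 δ ⟨x, hx⟩, ⟨_, rfl⟩, coeLinearMap_incl ℒ 𝒩 _⟩⟩
  · rintro _ ⟨x, rfl⟩
    rw [coeLinearMap_incl]
    exact x.2
  · rintro _ ⟨x, rfl⟩ _ ⟨y, rfl⟩ h
    rw [coeLinearMap_incl, coeLinearMap_incl] at h
    rw [Subtype.ext h]

variable [AddCommGroup Γ] [Module L N] [GradedAlgebra ℒ] [SetLike.GradedSMul ℒ 𝒩]

instance : Module L (Homogenization ℒ 𝒩) := GradedModule.isModule ℒ 𝒩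

theorem smul_incl {δ ε : Γ} {a : L} (ha : a ∈ ℒ δ) (x : 𝒩 ε) :
    a • incl ℒ 𝒩 ε x = incl ℒ 𝒩 (δ +ᵥ ε) ⟨a • (x : N), SetLike.GradedSMul.smul_mem ha x.2⟩ := by
  change decompose ℒ a • of (fun δ => 𝒩 δ) ε x = _
  rw [decompose_of_mem ℒ ha, Gmodule.of_smul_of]
  rfl

instance : SetLike.GradedSMul ℒ (grading ℒ 𝒩) where
  smul_mem := by
    rintro δ ε a _ ha ⟨x, rfl⟩
    exact ⟨_, (smul_incl ℒ 𝒩 ha x).symm⟩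

theorem coeLinearMap_smul (a : L) (x : Homogenization ℒ 𝒩) :
    coeLinearMap ℒ 𝒩 (a • x) = a • coeLinearMap ℒ 𝒩 x := by
  refine map_smul_of_homogeneous (ℒ := ℒ) (ℳ := grading ℒ 𝒩) _ ?_ a x
  rintro δ a ha ε _ ⟨x, rfl⟩
  rw [smul_incl ℒ 𝒩 ha, coeLinearMap_incl, coeLinearMap_incl]

instance [IsScalarTower k L N] : IsScalarTower k L (Homogenization ℒ 𝒩) := by
  refine .of_algebraMap_smul fun c x => ?_
  induction x using Decomposition.inductionOn (grading ℒ 𝒩) with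
  | zero => simp
  | @homogeneous δ x =>
    refine (bijOn_coeLinearMap ℒ 𝒩 δ).injOn ?_ (Submodule.smul_mem _ c x.2) ?_
    · simpa using SetLike.GradedSMul.smul_mem (SetLike.algebraMap_mem_graded ℒ c) x.2
    · rw [coeLinearMap_smul, map_smul, algebraMap_smul]
  | add x y hx hy => simp only [smul_add, hx, hy]

end Homogenization

end Homogenization

section Localization

open DirectSum

variable {R : Type} [CommRing R] {t : R}

variable (t) in
/-- The fraction `r / tᵐ`. -/
abbrev awayMk (r : R) (m : ℕ) : Localization.Away t :=
  Localization.mk r ⟨t ^ m, (Submonoid.mem_powers_iff _ _).mpr ⟨m, rfl⟩⟩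

variable (t) in
/-- `t` as a unit of `R[t⁻¹]`. -/
def awayUnit : (Localization.Away t)ˣ :=
  (IsLocalization.Away.algebraMap_isUnit t).unit

variable (t) in
theorem coe_awayUnit : (awayUnit t : Localization.Away t) = algebraMap R _ t :=
  rfl

variable (t) in
theorem awayMk_mul_pow (r : R) (m : ℕ) : awayMk t r m * awayUnit t ^ m = algebraMap R _ r := by
  rw [coe_awayUnit, ← map_pow, awayMk, Localization.mk_eq_mk']
  exact IsLocalization.mk'_spec _ r _

theorem exists_eq_awayMk (a : Localization.Away t) : ∃ r m, a = awayMk t r m := by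
  induction a using Localization.induction_on with
  | H y =>
    obtain ⟨r, _, m, rfl⟩ := y
    exact ⟨r, m, rfl⟩

section BarRing

theorem mk_self_eq_one : (Ideal.Quotient.mk (Ideal.span {t - 1}) t : BarRing R t) = 1 :=
  Ideal.Quotient.mk_eq_one_iff_sub_mem _ |>.2 <| Ideal.mem_span_singleton_self _

theorem algebraMap_algebraMap_barRing (r : R) :
    algebraMap (Localization.Away t) (BarRing R t) (algebraMap R _ r) = Ideal.Quotient.mk _ r :=
  IsLocalization.Away.lift_eq t (by simp [mk_self_eq_one]) r

theorem algebraMap_awayMk (r : R) (m : ℕ) :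
    algebraMap (Localization.Away t) (BarRing R t) (awayMk t r m) = Ideal.Quotient.mk _ r := by
  have h := congrArg (algebraMap _ (BarRing R t)) (awayMk_mul_pow t r m)
  rwa [map_mul, map_pow, coe_awayUnit, algebraMap_algebraMap_barRing,
    algebraMap_algebraMap_barRing, mk_self_eq_one, one_pow, mul_one] at h

instance (k : Type) [Field k] [Algebra k R] :
    IsScalarTower k (Localization.Away t) (BarRing R t) :=
  .of_algebraMap_eq fun c => by
    rw [IsScalarTower.algebraMap_apply k R (Localization.Away t), algebraMap_algebraMap_barRing]
    rfl

theorem isSpecialization_barRing :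
    IsSpecialization (awayUnit t) (Algebra.linearMap (Localization.Away t) (BarRing R t)) where
  exact a := by
    constructor
    · intro ha
      obtain ⟨r, m, rfl⟩ := exists_eq_awayMk a
      rw [Algebra.linearMap_apply, algebraMap_awayMk, Ideal.Quotient.eq_zero_iff_mem,
        Ideal.mem_span_singleton] at ha
      obtain ⟨s, rfl⟩ := ha
      refine ⟨awayMk t s m, ?_⟩
      rw [LinearMap.lsmul_apply, smul_eq_mul, ← ((awayUnit t).isUnit.pow m).mul_left_inj,
        mul_assoc, awayMk_mul_pow, awayMk_mul_pow, map_mul, map_sub, map_one, coe_awayUnit]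
    · rintro ⟨b, rfl⟩
      simp [coe_awayUnit, algebraMap_algebraMap_barRing, mk_self_eq_one]
  surjective b := by
    obtain ⟨r, rfl⟩ := Ideal.Quotient.mk_surjective b
    exact ⟨_, algebraMap_algebraMap_barRing r⟩

end BarRing

section Grading

variable {k Γ : Type} [Field k] [AddCommGroup Γ] [Algebra k R] {𝒜 : Γ → Submodule k R} {γ : Γ}

theorem awayMk_mem_locGrading {δ : Γ} {m : ℕ} {r : R} (hr : r ∈ 𝒜 (δ + m • γ)) :
    awayMk t r m ∈ locGrading k Γ R 𝒜 γ t δ :=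
  Submodule.subset_span ⟨m, r, hr, rfl⟩

variable (t γ) in
theorem algebraMap_mem_locGrading {δ : Γ} {r : R} (hr : r ∈ 𝒜 δ) :
    algebraMap R _ r ∈ locGrading k Γ R 𝒜 γ t δ := by
  rw [← awayMk_mul_pow t r 0, pow_zero, mul_one]
  exact awayMk_mem_locGrading (by simpa using hr)

theorem awayUnit_mem_locGrading (ht : t ∈ 𝒜 γ) :
    (awayUnit t : Localization.Away t) ∈ locGrading k Γ R 𝒜 γ t γ :=
  algebraMap_mem_locGrading t γ ht

instance [SetLike.GradedMonoid 𝒜] : SetLike.GradedMonoid (locGrading k Γ R 𝒜 γ t) where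
  one_mem := by
    simpa using algebraMap_mem_locGrading t γ (SetLike.GradedOne.one_mem (A := 𝒜))
  mul_mem := by
    intro δ ε a b ha hb
    refine (Submodule.mul_le.1 ?_ : _) a ha b hb
    rw [locGrading, locGrading, Submodule.span_mul_span, Submodule.span_le]
    rintro _ ⟨_, ⟨m, r, hr, rfl⟩, _, ⟨n, s, hs, rfl⟩, rfl⟩
    have hrs : r * s ∈ 𝒜 (δ + ε + (m + n) • γ) := by
      rw [add_smul, add_add_add_comm]
      exact SetLike.mul_mem_graded hr hs
    simpa [Localization.mk_mul, ← pow_add] using awayMk_mem_locGrading (t := t) hrs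

variable [DecidableEq Γ] [GradedAlgebra 𝒜]

variable (t 𝒜 γ) in
/-- The restriction to `R` of the homogeneous decomposition of `R[t⁻¹]`. -/
def awayDecompose : R →ₐ[k] ⨁ δ, locGrading k Γ R 𝒜 γ t δ :=
  (toAlgebra k (fun δ => 𝒜 δ)
    (fun δ => lof k Γ (fun δ => locGrading k Γ R 𝒜 γ t δ) δ ∘ₗ
      (Algebra.linearMap R (Localization.Away t) |>.restrictScalars k).restrict
        fun _ => algebraMap_mem_locGrading t γ)
    (of_eq_of_gradedMonoid_eq (Sigma.subtype_ext rfl (map_one (algebraMap R _))))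
    fun r s => by
      simp only [LinearMap.comp_apply, lof_eq_of, of_mul_of]
      exact of_eq_of_gradedMonoid_eq (Sigma.subtype_ext rfl (map_mul (algebraMap R _) _ _))).comp
    (decomposeAlgEquiv 𝒜).toAlgHom

theorem awayDecompose_of_mem {δ : Γ} {r : R} (hr : r ∈ 𝒜 δ) :
    awayDecompose t 𝒜 γ r = of (fun δ => locGrading k Γ R 𝒜 γ t δ) δ
      ⟨algebraMap R _ r, algebraMap_mem_locGrading t γ hr⟩ := by
  lift r to 𝒜 δ using hr
  change toModule k Γ _ _ (decompose 𝒜 (r : R)) = _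
  rw [decompose_coe, ← lof_eq_of k, toModule_lof]
  rfl

theorem isUnit_awayDecompose (ht : t ∈ 𝒜 γ) : IsUnit (awayDecompose t 𝒜 γ t) := by
  have hinv : awayMk t 1 1 ∈ locGrading k Γ R 𝒜 γ t (-γ) :=
    awayMk_mem_locGrading (by simpa using SetLike.GradedOne.one_mem)
  refine .of_mul_eq_one (of (fun δ => locGrading k Γ R 𝒜 γ t δ) (-γ) ⟨_, hinv⟩) ?_
  rw [awayDecompose_of_mem ht, of_mul_of]
  refine of_eq_of_gradedMonoid_eq (Sigma.subtype_ext (add_neg_cancel γ) ?_)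
  change algebraMap R _ t * awayMk t 1 1 = 1
  simpa [mul_comm, coe_awayUnit] using awayMk_mul_pow t 1 1

/-- The homogeneous decomposition of `R[t⁻¹]`. -/
def locDecompose (ht : t ∈ 𝒜 γ) :
    Localization.Away t →ₐ[k] ⨁ δ, locGrading k Γ R 𝒜 γ t δ :=
  IsLocalization.Away.liftAlgHom t (isUnit_awayDecompose ht)

theorem locDecompose_algebraMap (ht : t ∈ 𝒜 γ) (r : R) :
    locDecompose ht (algebraMap R _ r) = awayDecompose t 𝒜 γ r :=
  IsLocalization.Away.lift_eq t (isUnit_awayDecompose ht) r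

theorem locDecompose_awayMk (ht : t ∈ 𝒜 γ) {δ : Γ} {m : ℕ} {r : R} (hr : r ∈ 𝒜 (δ + m • γ)) :
    locDecompose ht (awayMk t r m) =
      of (fun δ => locGrading k Γ R 𝒜 γ t δ) δ ⟨awayMk t r m, awayMk_mem_locGrading hr⟩ := by
  have hmul := congrArg (locDecompose ht) (awayMk_mul_pow t r m)
  rw [map_mul, map_pow, coe_awayUnit, locDecompose_algebraMap, locDecompose_algebraMap,
    awayDecompose_of_mem hr] at hmul
  rw [← ((isUnit_awayDecompose ht).pow m).mul_left_inj, hmul, awayDecompose_of_mem ht, ofPow,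
    of_mul_of]
  exact of_eq_of_gradedMonoid_eq (Sigma.subtype_ext rfl (awayMk_mul_pow t r m).symm)

theorem locDecompose_coe (ht : t ∈ 𝒜 γ) {δ : Γ} (a : locGrading k Γ R 𝒜 γ t δ) :
    locDecompose ht a = of (fun δ => locGrading k Γ R 𝒜 γ t δ) δ a := by
  obtain ⟨a, ha⟩ := a
  induction ha using Submodule.span_induction with
  | mem a ha =>
    obtain ⟨m, r, hr, rfl⟩ := ha
    exact locDecompose_awayMk ht hr
  | zero => exact (map_zero (locDecompose ht)).trans (map_zero _).symm
  | add a b _ _ ha hb =>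
    exact (map_add (locDecompose ht) a b).trans (ha ▸ hb ▸ (map_add _ _ _).symm)
  | smul c a _ ha =>
    exact (map_smul (locDecompose ht) c a).trans (ha ▸ (map_smul (lof k Γ _ δ) c _).symm)

theorem coeAlgHom_locDecompose (ht : t ∈ 𝒜 γ) :
    (coeAlgHom (locGrading k Γ R 𝒜 γ t)).comp (locDecompose ht) = .id k _ := by
  refine IsLocalization.algHom_ext (Submonoid.powers t) (AlgHom.ext fun r => ?_)
  change coeAlgHom _ (locDecompose ht (algebraMap R _ r)) = algebraMap R _ r
  induction r using Decomposition.inductionOn 𝒜 with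
  | zero => simp
  | homogeneous r => rw [locDecompose_algebraMap, awayDecompose_of_mem r.2, coeAlgHom_of]
  | add r s hr hs => simp only [map_add, hr, hs]

/-- The grading of `R[t⁻¹]`; it is not an instance because it depends on `t` being homogeneous. -/
abbrev gradedAlgebraAway (ht : t ∈ 𝒜 γ) : GradedAlgebra (locGrading k Γ R 𝒜 γ t) :=
  .ofAlgHom _ (locDecompose ht) (coeAlgHom_locDecompose ht) fun _ => locDecompose_coe ht

theorem barGrading_mk (ht : t ∈ 𝒜 γ) (δ : Γ) :
    barGrading k Γ R 𝒜 γ t (QuotientAddGroup.mk δ) = (locGrading k Γ R 𝒜 γ t δ).map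
      ((Algebra.linearMap (Localization.Away t) (BarRing R t)).restrictScalars k) := by
  let := gradedAlgebraAway ht
  refine le_antisymm (Submodule.span_le.2 ?_) ?_
  · rintro _ ⟨ε, hε, r, hr, rfl⟩
    rw [← isSpecialization_barRing.map_eq_map_of_mk_eq (awayUnit_mem_locGrading ht) hε]
    exact ⟨_, algebraMap_mem_locGrading t γ hr, algebraMap_algebraMap_barRing r⟩
  · rw [locGrading, Submodule.map_span_le]
    rintro _ ⟨m, r, hr, rfl⟩
    refine Submodule.subset_span ⟨δ + m • γ, ?_, r, hr, algebraMap_awayMk r m⟩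
    exact QuotientAddGroup.mk_add_of_mem δ (nsmul_mem (AddSubgroup.mem_zmultiples γ) m)

end Grading

end Localization

namespace GradedMod

variable {k B Γ' : Type} [Field k] [CommRing B] [Algebra k B] [AddCommGroup Γ'] [DecidableEq Γ']
  {ℬ : Γ' → Submodule k B} (M : GradedMod k B Γ' ℬ)

instance : DirectSum.Decomposition M.grading := M.internal.chooseDecomposition

instance : SetLike.GradedSMul ℬ M.grading := ⟨fun δ ε b m hb hm => M.smul_mem δ ε b hb m hm⟩

end GradedMod

section Equivalence

variable {k Γ R : Type} [Field k] [AddCommGroup Γ] [DecidableEq Γ] [CommRing R] [Algebra k R]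
  {𝒜 : Γ → Submodule k R} {γ : Γ} {t : R}

/-- The canonical map `m ↦ 1 ⊗ m` from a graded module to its image under the functor. -/
abbrev toFCarrier (M : GradedMod k (Localization.Away t) Γ (locGrading k Γ R 𝒜 γ t)) :
    M.carrier →ₗ[Localization.Away t] FCarrier k Γ R 𝒜 γ t M :=
  TensorProduct.mk (Localization.Away t) (BarRing R t) M.carrier 1

variable (M M' : GradedMod k (Localization.Away t) Γ (locGrading k Γ R 𝒜 γ t))

theorem isSpecialization_toFCarrier : IsSpecialization (awayUnit t) (toFCarrier M) :=
  isSpecialization_barRing.mk_one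

theorem injOn_toFCarrier (hγ : ¬ IsOfFinAddOrder γ) (ht : t ∈ 𝒜 γ) (δ : Γ) :
    Set.InjOn (toFCarrier M) (M.grading δ) :=
  (isSpecialization_toFCarrier M).injOn hγ (awayUnit_mem_locGrading ht) δ

theorem toFCarrier_comp_inducedMap (f : GradedHom M M') :
    ((inducedMap k Γ R 𝒜 γ t M M' f).1.restrictScalars (Localization.Away t)) ∘ₗ toFCarrier M =
      toFCarrier M' ∘ₗ f.1 :=
  LinearMap.ext fun m => LinearMap.baseChange_tmul f.1 1 m

variable [GradedAlgebra 𝒜]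

theorem FGrading_mk (ht : t ∈ 𝒜 γ) (δ : Γ) : FGrading k Γ R 𝒜 γ t M (QuotientAddGroup.mk δ) =
    (M.grading δ).map ((toFCarrier M).restrictScalars k) := by
  let := gradedAlgebraAway ht
  refine le_antisymm (Submodule.span_le.2 ?_) ?_
  · rintro _ ⟨ε, hε, m, hm, rfl⟩
    rw [← (isSpecialization_toFCarrier M).map_eq_map_of_mk_eq (awayUnit_mem_locGrading ht) hε]
    exact ⟨m, hm, rfl⟩
  · rintro _ ⟨m, hm, rfl⟩
    exact Submodule.subset_span ⟨δ, rfl, m, hm, rfl⟩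

theorem isInternal_FGrading [DecidableEq (Γ ⧸ AddSubgroup.zmultiples γ)]
    (hγ : ¬ IsOfFinAddOrder γ) (ht : t ∈ 𝒜 γ) :
    DirectSum.IsInternal (FGrading k Γ R 𝒜 γ t M) :=
  (isSpecialization_toFCarrier M).isInternal hγ (awayUnit_mem_locGrading ht) (FGrading_mk M ht)

theorem smul_mem_FGrading (ht : t ∈ 𝒜 γ) {d e : Γ ⧸ AddSubgroup.zmultiples γ} {b : BarRing R t}
    (hb : b ∈ barGrading k Γ R 𝒜 γ t d) {z : FCarrier k Γ R 𝒜 γ t M}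
    (hz : z ∈ FGrading k Γ R 𝒜 γ t M e) : b • z ∈ FGrading k Γ R 𝒜 γ t M (d + e) := by
  obtain ⟨δ, rfl⟩ := QuotientAddGroup.mk_surjective d
  obtain ⟨ε, rfl⟩ := QuotientAddGroup.mk_surjective e
  rw [barGrading_mk ht] at hb
  rw [FGrading_mk M ht] at hz
  obtain ⟨a, ha, rfl⟩ := hb
  obtain ⟨m, hm, rfl⟩ := hz
  rw [← QuotientAddGroup.mk_add, FGrading_mk M ht]
  refine ⟨a • m, M.smul_mem δ ε a ha m hm, ?_⟩
  change toFCarrier M (a • m) = algebraMap _ (BarRing R t) a • toFCarrier M m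
  rw [map_smul, algebraMap_smul]

theorem bijective_inducedMap (hγ : ¬ IsOfFinAddOrder γ) (ht : t ∈ 𝒜 γ) :
    Function.Bijective (inducedMap k Γ R 𝒜 γ t M M') := by
  let := gradedAlgebraAway ht
  constructor
  · intro f f' h
    refine Subtype.ext (gradedHom_ext_of_injOn (injOn_toFCarrier M' hγ ht) f.2 f'.2 ?_)
    rw [← toFCarrier_comp_inducedMap, h, toFCarrier_comp_inducedMap]
  · rintro ⟨g, hg⟩
    obtain ⟨f, hf, hfg⟩ := exists_gradedHom_comp_eq (ℒ := locGrading k Γ R 𝒜 γ t)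
      (ℳ := M.grading) (injOn_toFCarrier M' hγ ht)
      (g.restrictScalars (Localization.Away t) ∘ₗ toFCarrier M) fun δ => by
        have := hg (QuotientAddGroup.mk δ)
        rw [FGrading_mk M ht, FGrading_mk M' ht, ← Submodule.map_comp] at this
        exact this
    refine ⟨⟨f, hf⟩, Subtype.ext ?_⟩
    refine TensorProduct.AlgebraTensorModule.curry_injective (LinearMap.ext_ring ?_)
    exact (toFCarrier_comp_inducedMap M M' ⟨f, hf⟩).trans hfg

variable [DecidableEq (Γ ⧸ AddSubgroup.zmultiples γ)]

theorem exists_FCarrier_equiv_of_bijOn (hγ : ¬ IsOfFinAddOrder γ) (ht : t ∈ 𝒜 γ)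
    (N : GradedMod k (BarRing R t) (Γ ⧸ AddSubgroup.zmultiples γ) (barGrading k Γ R 𝒜 γ t))
    [Module (Localization.Away t) N.carrier]
    [IsScalarTower (Localization.Away t) (BarRing R t) N.carrier]
    (f : M.carrier →ₗ[Localization.Away t] N.carrier)
    (hf : ∀ δ, Set.BijOn f (M.grading δ) (N.grading (QuotientAddGroup.mk δ))) :
    ∃ e : FCarrier k Γ R 𝒜 γ t M ≃ₗ[BarRing R t] N.carrier,
      ∀ d, (FGrading k Γ R 𝒜 γ t M d).map
          ((e : FCarrier k Γ R 𝒜 γ t M →ₗ[BarRing R t] N.carrier).restrictScalars k)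
        = N.grading d := by
  let := gradedAlgebraAway ht
  let F : FCarrier k Γ R 𝒜 γ t M →ₗ[BarRing R t] N.carrier := f.liftBaseChange _
  have hcomp : F ∘ toFCarrier M = f := by
    ext m
    simp [F]
  have hF (δ : Γ) :
      Set.BijOn (F ∘ toFCarrier M) (M.grading δ) (N.grading (QuotientAddGroup.mk δ)) :=
    hcomp ▸ hf δ
  have hbij : Function.Bijective F :=
    (isSpecialization_toFCarrier M).bijective_of_bijOn hγ (awayUnit_mem_locGrading ht)
      (FGrading_mk M ht) N.internal (F.restrictScalars k) hF
  refine ⟨.ofBijective F hbij, fun d => ?_⟩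
  obtain ⟨δ, rfl⟩ := QuotientAddGroup.mk_surjective d
  rw [FGrading_mk M ht, ← Submodule.map_comp]
  exact SetLike.coe_injective (hF δ).image_eq

theorem exists_FCarrier_equiv (hγ : ¬ IsOfFinAddOrder γ) (ht : t ∈ 𝒜 γ)
    (N : GradedMod k (BarRing R t) (Γ ⧸ AddSubgroup.zmultiples γ) (barGrading k Γ R 𝒜 γ t)) :
    ∃ M : GradedMod k (Localization.Away t) Γ (locGrading k Γ R 𝒜 γ t),
    ∃ e : FCarrier k Γ R 𝒜 γ t M ≃ₗ[BarRing R t] N.carrier,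
      ∀ d, (FGrading k Γ R 𝒜 γ t M d).map
          ((e : FCarrier k Γ R 𝒜 γ t M →ₗ[BarRing R t] N.carrier).restrictScalars k)
        = N.grading d := by
  let := gradedAlgebraAway ht
  let : Module (Localization.Away t) N.carrier := .compHom _ (algebraMap _ (BarRing R t))
  have : IsScalarTower (Localization.Away t) (BarRing R t) N.carrier :=
    .of_algebraMap_smul fun _ _ => rfl
  have : IsScalarTower k (Localization.Away t) N.carrier :=
    .to₁₂₄ k (Localization.Away t) (BarRing R t) N.carrier
  let 𝒩 (δ : Γ) : Submodule k N.carrier := N.grading (QuotientAddGroup.mk δ)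
  have : SetLike.GradedSMul (locGrading k Γ R 𝒜 γ t) 𝒩 :=
    ⟨fun δ ε a n ha hn => N.smul_mem (QuotientAddGroup.mk δ) (QuotientAddGroup.mk ε)
      (algebraMap _ (BarRing R t) a) (barGrading_mk ht δ ▸ ⟨a, ha, rfl⟩) n hn⟩
  let M : GradedMod k (Localization.Away t) Γ (locGrading k Γ R 𝒜 γ t) :=
    { carrier := Homogenization (locGrading k Γ R 𝒜 γ t) 𝒩
      grading := Homogenization.grading _ 𝒩
      internal := DirectSum.Decomposition.isInternal _
      smul_mem := fun _ _ _ ha _ hm => SetLike.GradedSMul.smul_mem ha hm }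
  let f : M.carrier →ₗ[Localization.Away t] N.carrier :=
    { Homogenization.coeLinearMap (locGrading k Γ R 𝒜 γ t) 𝒩 with
      map_smul' := Homogenization.coeLinearMap_smul _ 𝒩 }
  exact ⟨M, exists_FCarrier_equiv_of_bijOn M hγ ht N f (Homogenization.bijOn_coeLinearMap _ 𝒩)⟩

end Equivalence

theorem dehomogenization_is_equivalence_of_graded_module_categories_general
    {k Γ R : Type} [Field k] [AddCommGroup Γ] [DecidableEq Γ] [CommRing R] [Algebra k R]
    {𝒜 : Γ → Submodule k R} [GradedAlgebra 𝒜] {γ : Γ} {t : R}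
    [DecidableEq (Γ ⧸ AddSubgroup.zmultiples γ)] (hγ : ¬ IsOfFinAddOrder γ) (ht : t ∈ 𝒜 γ) :
    (∀ M : GradedMod k (Localization.Away t) Γ (locGrading k Γ R 𝒜 γ t),
      DirectSum.IsInternal (FGrading k Γ R 𝒜 γ t M) ∧
      ∀ (d e : Γ ⧸ AddSubgroup.zmultiples γ) (r : BarRing R t),
        r ∈ barGrading k Γ R 𝒜 γ t d →
        ∀ z ∈ FGrading k Γ R 𝒜 γ t M e, r • z ∈ FGrading k Γ R 𝒜 γ t M (d + e)) ∧
    (∀ M M' : GradedMod k (Localization.Away t) Γ (locGrading k Γ R 𝒜 γ t),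
      Function.Bijective (inducedMap k Γ R 𝒜 γ t M M')) ∧
    (∀ N : GradedMod k (BarRing R t) (Γ ⧸ AddSubgroup.zmultiples γ)
        (barGrading k Γ R 𝒜 γ t),
      ∃ M : GradedMod k (Localization.Away t) Γ (locGrading k Γ R 𝒜 γ t),
      ∃ e : FCarrier k Γ R 𝒜 γ t M ≃ₗ[BarRing R t] N.carrier,
        ∀ d, (FGrading k Γ R 𝒜 γ t M d).map
            ((e : FCarrier k Γ R 𝒜 γ t M →ₗ[BarRing R t] N.carrier).restrictScalars k)
          = N.grading d) :=
  ⟨fun M => ⟨isInternal_FGrading M hγ ht, fun _ _ _ hr _ hz => smul_mem_FGrading M ht hr hz⟩,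
    fun M M' => bijective_inducedMap M M' hγ ht, exists_FCarrier_equiv hγ ht⟩

section Statement17

variable (k : Type) [Field k] [IsAlgClosed k] [CharZero k]
variable (Γ : Type) [AddCommGroup Γ] [DecidableEq Γ]
variable (R : Type) [CommRing R] [Algebra k R]
variable (𝒜 : Γ → Submodule k R) [GradedAlgebra 𝒜]
variable (γ : Γ) (t : R)
variable [DecidableEq (Γ ⧸ AddSubgroup.zmultiples γ)]

theorem dehomogenization_is_equivalence_of_graded_module_categories
    -- `Γ` is finitely generated of rank 1: `ν : Γ → ℤ` is surjective with finite kernel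
    (hFG : AddGroup.FG Γ) (ν : Γ →+ ℤ) (hν : Function.Surjective ν)
    (hrank : Finite ↥ν.ker)
    -- `R` is connected: `R₀ = k`
    (hconn : 𝒜 0 = Submodule.span k {(1 : R)})
    -- `ν` is positive on the degrees of the nonzero components of `R`
    (hpos : ∀ δ : Γ, δ ≠ 0 → 𝒜 δ ≠ ⊥ → 0 < ν δ)
    -- `t` is a nonzero homogeneous element of nonzero degree `γ`
    (hγ : γ ≠ 0) (ht : t ∈ 𝒜 γ) (ht0 : t ≠ 0) :
    -- (1) the functor takes values in `Γ̄`-graded `R/(t−1)`-modules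
    (∀ M : GradedMod k (Localization.Away t) Γ (locGrading k Γ R 𝒜 γ t),
      DirectSum.IsInternal (FGrading k Γ R 𝒜 γ t M) ∧
      ∀ (d e : Γ ⧸ AddSubgroup.zmultiples γ) (r : BarRing R t),
        r ∈ barGrading k Γ R 𝒜 γ t d →
        ∀ z ∈ FGrading k Γ R 𝒜 γ t M e, r • z ∈ FGrading k Γ R 𝒜 γ t M (d + e)) ∧
    -- (2) it is fully faithful on degree-preserving homomorphisms
    (∀ M M' : GradedMod k (Localization.Away t) Γ (locGrading k Γ R 𝒜 γ t),
      Function.Bijective (inducedMap k Γ R 𝒜 γ t M M')) ∧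
    -- (3) it is essentially surjective: every `Γ̄`-graded `R/(t−1)`-module is
    -- isomorphic, by a degree-preserving isomorphism, to the image of a `Γ`-graded
    -- `R[t⁻¹]`-module
    (∀ N : GradedMod k (BarRing R t) (Γ ⧸ AddSubgroup.zmultiples γ)
        (barGrading k Γ R 𝒜 γ t),
      ∃ M : GradedMod k (Localization.Away t) Γ (locGrading k Γ R 𝒜 γ t),
      ∃ e : FCarrier k Γ R 𝒜 γ t M ≃ₗ[BarRing R t] N.carrier,
        ∀ d, (FGrading k Γ R 𝒜 γ t M d).map
            ((e : FCarrier k Γ R 𝒜 γ t M →ₗ[BarRing R t] N.carrier).restrictScalars k)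
          = N.grading d) :=
  have hνγ : ν γ ≠ 0 := (hpos γ hγ (Submodule.ne_bot_iff _ |>.2 ⟨t, ht, ht0⟩)).ne'
  dehomogenization_is_equivalence_of_graded_module_categories_general
    (not_isOfFinAddOrder_of_map_ne_zero ν hνγ) ht

end Statement17

end
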